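/- Let p = p₀p₁⋯p_j be a nonempty string over {l,r}, let m, n be natural numbers, and fix fresh indices a, a+1, …, a+j−1 pairwise distinct and distinct from m and n. Let ⋆ be the tweaked groupoid operation ‖m,p,n‖′ on finitely supported vectors over Z₂ (or more generally ⋆ = ‖m,p,n‖′ + ⋆′, the pointwise sum mod 2, where ⋆′ is any operation whose output is always 0 in components n, a, a+1, …, a+j−1). Let s be any groupoid term such that p is the path to a node of T(s), and let t = s_p be the subterm of s rooted at that node. Then for all values of the variables of s, s[n] = (t[m] + 1) mod 2. -/

import Mathlib

/-- Evaluation of a groupoid term in a groupoid `⟨G, op⟩` under the assignment `f`. -/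
def evalWith {α G : Type*} (op : G → G → G) (f : α → G) : FreeMagma α → G
  | .of a => f a
  | .mul s t => op (evalWith op f s) (evalWith op f t)

/-- The subterm of `s` rooted at the node of `T(s)` with path `p` (a string over
`{l, r}`, here `false = l`, `true = r`, read from the root), if such a node exists. -/
def subtermAt {α : Type*} : FreeMagma α → List Bool → Option (FreeMagma α)
  | s, [] => some s
  | .of _, _ :: _ => none
  | .mul s t, b :: p => subtermAt (bif b then t else s) p

/-- `sel b x y` is `x` if `b = false` (i.e. the letter `l`) and `y` if `b = true`
(i.e. the letter `r`). -/
def sel {G : Type*} (b : Bool) (x y : G) : G := bif b then y else x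

theorem path_aux {α : Type*} (m : ℕ)
    (star : (ℕ →₀ ZMod 2) → (ℕ →₀ ZMod 2) → (ℕ →₀ ZMod 2))
    (f : α → (ℕ →₀ ZMod 2)) (sp : FreeMagma α) (q : List Bool) :
    ∀ (c : Bool) (b : ℕ) (s : FreeMagma α),
    (∀ i, i < q.length → ∀ x y,
      star x y (b + i) = sel ((c :: q).getD i false) x y (b + i + 1)) →
    (∀ x y, star x y (b + q.length) = sel ((c :: q).getD q.length false) x y m) →
    subtermAt s (c :: q) = some sp →
    evalWith star f s b = evalWith star f sp m := by
  induction q with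
  | nil =>
    intro c b s _ h2 h3
    cases s with
    | of v => simp [subtermAt] at h3
    | mul s t =>
      have h := h2 (evalWith star f s) (evalWith star f t)
      cases c <;> simp_all [subtermAt, sel, evalWith]
  | cons d q ih =>
    intro c b s h1 h2 h3
    cases s with
    | of v => simp [subtermAt] at h3
    | mul s t =>
      have h := h1 0 (by simp) (evalWith star f s) (evalWith star f t)
      have key := ih d (b + 1) (bif c then t else s)
        (fun i hi x y => by
          have := h1 (i + 1) (by simpa using hi) x y
          rw [List.getD_cons_succ] at this
          rw [show b + 1 + i = b + (i + 1) by omega]; exact this)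
        (fun x y => by
          have := h2 x y
          rw [List.length_cons, List.getD_cons_succ] at this
          rw [show b + 1 + q.length = b + (q.length + 1) by omega]; exact this)
        (by simpa only [subtermAt] using h3)
      rw [← key]
      cases c <;> simpa [sel, evalWith] using h

/-- Let `p = p₀p₁⋯p_j` be a nonempty string over `{l, r}`
(`false = l`, `true = r`), let `m n` be naturals, and let the fresh indices
`a, a+1, …, a+j-1` be distinct from `m` and `n`.  Let `⋆` be any operation on finitely
supported vectors over `Z₂` agreeing with the tweaked operation `‖m,p,n‖′` on components
`n, a, …, a+j-1` (e.g. `‖m,p,n‖′` itself, or `‖m,p,n‖′ + ⋆′` with `⋆′` vanishing on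
those components): writing `z = x ⋆ y`, if `j = 0` then `z[n] = (x or y)[m] + 1`
according as `p₀ = l` or `r`; if `j ≥ 1` then `z[n] = (x or y)[a] + 1` according to
`p₀`, `z[a+i] = (x or y)[a+i+1]` according to `p_{i+1}` for `0 ≤ i ≤ j-2`, and
`z[a+j-1] = (x or y)[m]` according to `p_j` (all values mod 2).  If `s` is any groupoid
term such that `p` is the path to a node of `T(s)`, with subterm `t = s_p` rooted there,
then `s[n] = (t[m] + 1) mod 2` for all values of the variables. -/
theorem tweaked_path_lemma (p : List Bool) (hp : p ≠ []) (m n a : ℕ)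
    (hdist : ∀ i < p.length - 1, a + i ≠ m ∧ a + i ≠ n)
    (star : (ℕ →₀ ZMod 2) → (ℕ →₀ ZMod 2) → (ℕ →₀ ZMod 2))
    (hn0 : p.length = 1 → ∀ x y, star x y n = sel (p.getD 0 false) x y m + 1)
    (hn1 : 2 ≤ p.length → ∀ x y, star x y n = sel (p.getD 0 false) x y a + 1)
    (hmid : ∀ i, i + 2 ≤ p.length - 1 → ∀ x y,
      star x y (a + i) = sel (p.getD (i + 1) false) x y (a + i + 1))
    (hlast : 2 ≤ p.length → ∀ x y,
      star x y (a + (p.length - 2)) = sel (p.getD (p.length - 1) false) x y m)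
    {α : Type*} (s sp : FreeMagma α) (hsp : subtermAt s p = some sp)
    (f : α → (ℕ →₀ ZMod 2)) :
    evalWith star f s n = evalWith star f sp m + 1 := by
  cases p with
  | nil => exact absurd rfl hp
  | cons c q =>
    cases s with
    | of v => simp [subtermAt] at hsp
    | mul s t =>
      cases q with
      | nil =>
        have h := hn0 rfl (evalWith star f s) (evalWith star f t)
        cases c <;> simp_all [subtermAt, sel, evalWith]
      | cons d q =>
        have h := hn1 (by simp) (evalWith star f s) (evalWith star f t)
        have key := path_aux m star f sp q d a (bif c then t else s)
          (fun i hi x y => by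
            have := hmid i (by simp only [List.length_cons]; omega) x y
            rwa [List.getD_cons_succ] at this)
          (fun x y => by
            have := hlast (by simp) x y
            simpa using this)
          (by simpa only [subtermAt] using hsp)
        rw [← key]
        cases c <;> simpa [sel, evalWith] using h
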